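/- Let p be a real number with 1 ≤ p < ∞. Let G : ℓ^m → ℓ^r be strictly causal, ℓ_p-stable and incrementally finite-gain ℓ_p-stable, and let Q : ℓ^r → ℓ^m be causal and ℓ_p-stable. For each y ∈ ℓ^r there exists a unique ω ∈ ℓ^r with ω = y − G(Q ω) (since G∘Q is strictly causal); define the controller K : ℓ^r → ℓ^m by K y := Q ω (equivalently, K = Q ∘ (G Q + I)^{-1}). Then K is causal and the closed loop of G and K is ℓ_p-stable: for all v ∈ ℓ_p^r and d ∈ ℓ_p^m, the unique closed-loop signals satisfying y = G u + v and u = K y + d lie in ℓ_p, i.e., y ∈ ℓ_p^r and u ∈ ℓ_p^m. -/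

import Mathlib

/-- Sequences with values in `ℝ^n` (with the Euclidean norm). -/
abbrev Traj (n : ℕ) : Type := ℕ → EuclideanSpace ℝ (Fin n)

/-- A causal operator on sequences. -/
def Causal {n m : ℕ} (A : Traj n → Traj m) : Prop :=
  ∀ (x x' : Traj n) (t : ℕ), (∀ s, s ≤ t → x s = x' s) → A x t = A x' t

/-- A strictly causal operator on sequences. -/
def StrictlyCausal {n m : ℕ} (A : Traj n → Traj m) : Prop :=
  ∀ (x x' : Traj n) (t : ℕ), (∀ s, s < t → x s = x' s) → A x t = A x' t

/-- Causal in the first argument, strictly causal in the second argument. -/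
def CausalSC {n q m : ℕ} (B : Traj n → Traj q → Traj m) : Prop :=
  ∀ (x x' : Traj n) (z z' : Traj q) (t : ℕ),
    (∀ s, s ≤ t → x s = x' s) → (∀ s, s < t → z s = z' s) → B x z t = B x' z' t

/-- Causal in both arguments. -/
def CausalCC {n q m : ℕ} (B : Traj n → Traj q → Traj m) : Prop :=
  ∀ (x x' : Traj n) (z z' : Traj q) (t : ℕ),
    (∀ s, s ≤ t → x s = x' s) → (∀ s, s ≤ t → z s = z' s) → B x z t = B x' z' t

/-- Strictly causal in both arguments. -/
def CausalSS {n q m : ℕ} (B : Traj n → Traj q → Traj m) : Prop :=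
  ∀ (x x' : Traj n) (z z' : Traj q) (t : ℕ),
    (∀ s, s < t → x s = x' s) → (∀ s, s < t → z s = z' s) → B x z t = B x' z' t

/-- Membership in `ℓ_p`: summability of `‖x t‖ ^ p`. -/
def InLp (p : ℝ) {E : Type*} [Norm E] (x : ℕ → E) : Prop :=
  Summable fun t => ‖x t‖ ^ p

/-- The `ℓ_p` norm `(∑ₜ ‖x t‖ ^ p) ^ (1/p)` of a sequence. -/
noncomputable def lpSeqNorm (p : ℝ) {E : Type*} [Norm E] (x : ℕ → E) : ℝ :=
  (∑' t, ‖x t‖ ^ p) ^ (1 / p)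

/-- The `ℝ^{r+m}`-valued sequence obtained by stacking `v` and `d`
(the norm of `(v t, d t)` is the Euclidean norm of the concatenated vector). -/
noncomputable def pairSeq {r m : ℕ} (v : Traj r) (d : Traj m) :
    ℕ → WithLp 2 (EuclideanSpace ℝ (Fin r) × EuclideanSpace ℝ (Fin m)) :=
  fun t => (WithLp.equiv 2 _).symm (v t, d t)

/-- An exponentially decaying sequence: `‖x t‖ ≤ k · α ^ t` with `k > 0`, `α ∈ (0,1)`. -/
def ExpDecay {E : Type*} [Norm E] (x : ℕ → E) : Prop :=
  ∃ k : ℝ, 0 < k ∧ ∃ α : ℝ, 0 < α ∧ α < 1 ∧ ∀ t, ‖x t‖ ≤ k * α ^ t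

/-!
If `A` is strictly causal, the values of `A^[k] x` at times `t < k` do not depend on `x`; so the
iterates of `A` stabilise at each time, and `A` has a unique fixed point. Applied to
`ω ↦ y - G (Q ω)`, this gives `ω`.

Write `u' = Q ω`, so that `ω = y - G u'` and `K y = u'`. In the closed loop `y = G u + v` and
`u = u' + d`, hence `ω = (G u - G u') + v` with `u - u' = d` in `ℓ_p`. The incremental gain bound
for `G` is only available between `ℓ_p` inputs, and `u`, `u'` are not yet known to be such. But the
truncations of `u` and `u'` to `t < T` are, they differ by the truncation of `d`, and by causality
`G` takes the same values on them as on `u` and `u'` for `t < T`. So the partial sums of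
`‖G u - G u'‖ ^ p` are bounded uniformly in `T`, whence `ω`, then `u = Q ω + d`, and finally
`y = G u + v` are in `ℓ_p`.
-/

section Causality

variable {α β γ : Type*}

/-- Causality of an operator between sequence spaces with arbitrary sets of values;
`Causal` is the case of Euclidean values. -/
def IsCausal (A : (ℕ → α) → ℕ → β) : Prop :=
  ∀ (x x' : ℕ → α) (t : ℕ), (∀ s ≤ t, x s = x' s) → A x t = A x' t

/-- Strict causality of an operator between sequence spaces with arbitrary sets of values;
`StrictlyCausal` is the case of Euclidean values. -/
def IsStrictlyCausal (A : (ℕ → α) → ℕ → β) : Prop :=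
  ∀ (x x' : ℕ → α) (t : ℕ), (∀ s < t, x s = x' s) → A x t = A x' t

theorem IsCausal.apply_indicator_Iio [Zero α] {A : (ℕ → α) → ℕ → β} (hA : IsCausal A)
    (x : ℕ → α) {t T : ℕ} (ht : t < T) : A ((Set.Iio T).indicator x) t = A x t :=
  hA _ _ t fun _ hs => Set.indicator_of_mem (Set.mem_Iio.2 (hs.trans_lt ht)) x

namespace IsStrictlyCausal

theorem isCausal {A : (ℕ → α) → ℕ → β} (hA : IsStrictlyCausal A) : IsCausal A :=
  fun x x' t h => hA x x' t fun s hs => h s hs.le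

theorem comp_isCausal {A : (ℕ → β) → ℕ → γ} {B : (ℕ → α) → ℕ → β}
    (hA : IsStrictlyCausal A) (hB : IsCausal B) : IsStrictlyCausal (A ∘ B) :=
  fun x x' t h => hA (B x) (B x') t fun s hs => hB x x' s fun r hr => h r (hr.trans_lt hs)

theorem const_sub [Sub β] {A : (ℕ → α) → ℕ → β} (hA : IsStrictlyCausal A) (y : ℕ → β) :
    IsStrictlyCausal fun x => y - A x :=
  fun x x' t h => congrArg (y t - ·) (hA x x' t h)

theorem iterate_apply_eq {A : (ℕ → α) → ℕ → α} (hA : IsStrictlyCausal A) (x x' : ℕ → α)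
    {k t : ℕ} (ht : t < k) : A^[k] x t = A^[k] x' t := by
  induction k generalizing t with
  | zero => exact absurd ht t.not_lt_zero
  | succ k ih =>
    rw [Function.iterate_succ_apply', Function.iterate_succ_apply']
    exact hA _ _ t fun s hs => ih (hs.trans_le (Nat.le_of_lt_succ ht))

theorem iterate_apply_eq_of_le {A : (ℕ → α) → ℕ → α} (hA : IsStrictlyCausal A) (x : ℕ → α)
    {k l t : ℕ} (ht : t < k) (hkl : k ≤ l) : A^[k] x t = A^[l] x t := by
  rw [← Nat.add_sub_cancel' hkl, Function.iterate_add_apply]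
  exact hA.iterate_apply_eq x _ ht

theorem existsUnique_isFixedPt [Nonempty α] {A : (ℕ → α) → ℕ → α} (hA : IsStrictlyCausal A) :
    ∃! x, Function.IsFixedPt A x := by
  obtain ⟨x₀⟩ := (inferInstance : Nonempty (ℕ → α))
  refine ⟨fun t => A^[t + 1] x₀ t, ?_, fun x hx => ?_⟩
  · funext t
    rw [Function.iterate_succ_apply']
    exact hA _ _ t fun s hs => hA.iterate_apply_eq_of_le x₀ s.lt_succ_self hs
  · funext t
    calc x t = A^[t + 1] x t := congrFun (hx.iterate (t + 1)).symm t
      _ = A^[t + 1] x₀ t := hA.iterate_apply_eq x x₀ t.lt_succ_self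

theorem existsUnique_eq_sub [Nonempty α] [Sub α] {A : (ℕ → α) → ℕ → α} (hA : IsStrictlyCausal A)
    (y : ℕ → α) : ∃! x, x = y - A x := by
  simpa only [Function.IsFixedPt, eq_comm] using (hA.const_sub y).existsUnique_isFixedPt

theorem apply_eq_of_eq_sub [Sub α] {A : (ℕ → α) → ℕ → α} (hA : IsStrictlyCausal A)
    {x x' y y' : ℕ → α} (hx : x = y - A x) (hx' : x' = y' - A x') {t : ℕ}
    (hy : ∀ s ≤ t, y s = y' s) : x t = x' t := by
  induction t using Nat.strong_induction_on with
  | _ t ih =>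
    have hAx : A x t = A x' t :=
      hA x x' t fun s hs => ih s hs fun r hr => hy r (hr.trans hs.le)
    rw [hx, hx', Pi.sub_apply, Pi.sub_apply, hy t le_rfl, hAx]

end IsStrictlyCausal

/-- `K` is the internal-model controller `Q ∘ (G Q + I)⁻¹` of the plant `G` with Youla parameter
`Q`. The inverse is encoded by its defining equation, so this pins down `K y` only if that equation
is solvable. -/
def IsInternalModelController [Sub β] (G : (ℕ → α) → ℕ → β)
    (Q K : (ℕ → β) → ℕ → α) : Prop :=
  ∀ y ω, ω = y - G (Q ω) → K y = Q ω

theorem IsInternalModelController.isCausal [Nonempty β] [Sub β] {G : (ℕ → α) → ℕ → β}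
    {Q K : (ℕ → β) → ℕ → α} (hK : IsInternalModelController G Q K) (hG : IsStrictlyCausal G)
    (hQ : IsCausal Q) : IsCausal K := by
  intro y y' t hy
  have hGQ : IsStrictlyCausal (G ∘ Q) := hG.comp_isCausal hQ
  obtain ⟨ω, hω, -⟩ := hGQ.existsUnique_eq_sub y
  obtain ⟨ω', hω', -⟩ := hGQ.existsUnique_eq_sub y'
  rw [hK y ω hω, hK y' ω' hω']
  exact hQ ω ω' t fun s hs => hGQ.apply_eq_of_eq_sub hω hω' fun r hr => hy r (hr.trans hs)

end Causality

section SequenceSpace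

variable {E : Type*} [NormedAddCommGroup E] {p : ℝ} {x y : ℕ → E}

theorem inLp_iff_memℓp (hp : 0 < p) :
    InLp p x ↔ Memℓp (E := fun _ : ℕ => E) x (ENNReal.ofReal p) := by
  have hp_toReal : (ENNReal.ofReal p).toReal = p := ENNReal.toReal_ofReal hp.le
  rw [memℓp_gen_iff (hp_toReal.symm ▸ hp), hp_toReal, InLp]

theorem InLp.add (hp : 0 < p) (hx : InLp p x) (hy : InLp p y) : InLp p (x + y) :=
  (inLp_iff_memℓp hp).2 (((inLp_iff_memℓp hp).1 hx).add ((inLp_iff_memℓp hp).1 hy))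

theorem InLp.sub (hp : 0 < p) (hx : InLp p x) (hy : InLp p y) : InLp p (x - y) :=
  (inLp_iff_memℓp hp).2 (((inLp_iff_memℓp hp).1 hx).sub ((inLp_iff_memℓp hp).1 hy))

theorem inLp_indicator_of_finite (hp : p ≠ 0) {s : Set ℕ} (hs : s.Finite) (x : ℕ → E) :
    InLp p (s.indicator x) := by
  refine summable_of_ne_finset_zero (s := hs.toFinset) fun t ht => ?_
  rw [Set.indicator_of_notMem (mt hs.mem_toFinset.2 ht), norm_zero, Real.zero_rpow hp]

theorem norm_indicator_rpow_le (hp : 0 ≤ p) (s : Set ℕ) (x : ℕ → E) (t : ℕ) :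
    ‖s.indicator x t‖ ^ p ≤ ‖x t‖ ^ p :=
  Real.rpow_le_rpow (norm_nonneg _) (norm_indicator_le_norm_self x t) hp

theorem tsum_norm_rpow_nonneg (p : ℝ) (x : ℕ → E) : 0 ≤ ∑' t, ‖x t‖ ^ p :=
  tsum_nonneg fun t => Real.rpow_nonneg (norm_nonneg (x t)) p

theorem InLp.indicator (hp : 0 ≤ p) (hx : InLp p x) (s : Set ℕ) : InLp p (s.indicator x) :=
  hx.of_nonneg_of_le (fun _ => Real.rpow_nonneg (norm_nonneg _) p) (norm_indicator_rpow_le hp s x)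

theorem lpSeqNorm_nonneg (p : ℝ) (x : ℕ → E) : 0 ≤ lpSeqNorm p x :=
  Real.rpow_nonneg (tsum_norm_rpow_nonneg p x) _

theorem lpSeqNorm_indicator_le (hp : 0 ≤ p) (hx : InLp p x) (s : Set ℕ) :
    lpSeqNorm p (s.indicator x) ≤ lpSeqNorm p x :=
  Real.rpow_le_rpow (tsum_norm_rpow_nonneg p _)
    ((hx.indicator hp s).tsum_le_tsum (norm_indicator_rpow_le hp s x) hx) (one_div_nonneg.2 hp)

theorem lpSeqNorm_rpow (hp : p ≠ 0) (x : ℕ → E) : lpSeqNorm p x ^ p = ∑' t, ‖x t‖ ^ p := by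
  rw [lpSeqNorm, one_div, Real.rpow_inv_rpow (tsum_norm_rpow_nonneg p x) hp]

theorem InLp.sum_le_lpSeqNorm_rpow (hp : p ≠ 0) (hx : InLp p x) (s : Finset ℕ) :
    ∑ t ∈ s, ‖x t‖ ^ p ≤ lpSeqNorm p x ^ p := by
  rw [lpSeqNorm_rpow hp]
  exact hx.sum_le_tsum s fun t _ => Real.rpow_nonneg (norm_nonneg (x t)) p

end SequenceSpace

section Stability

variable {E F : Type*} [NormedAddCommGroup E] [NormedAddCommGroup F] {p : ℝ}

/-- `ℓ_p`-stability of an operator: it maps `ℓ_p` into `ℓ_p`. -/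
def IsLpStable (p : ℝ) (A : (ℕ → E) → ℕ → F) : Prop :=
  ∀ x, InLp p x → InLp p (A x)

/-- Incremental finite-gain `ℓ_p`-stability: the operator is Lipschitz on `ℓ_p`. It is meant for
operators that are also `IsLpStable`, since `lpSeqNorm` is `0` outside `ℓ_p`. -/
def IsIncrementallyFiniteGain (p : ℝ) (A : (ℕ → E) → ℕ → F) : Prop :=
  ∃ γ : ℝ, 0 ≤ γ ∧ ∀ x₁ x₂, InLp p x₁ → InLp p x₂ →
    lpSeqNorm p (A x₁ - A x₂) ≤ γ * lpSeqNorm p (x₁ - x₂)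

/-- `ℓ_p`-stability of the closed loop of a plant `G` and a controller `K`, with disturbance `v` on
the output of the plant and `d` on the output of the controller. -/
def IsClosedLoopLpStable (p : ℝ) (G : (ℕ → E) → ℕ → F) (K : (ℕ → F) → ℕ → E) : Prop :=
  ∀ v d y u, y = G u + v → u = K y + d → InLp p v → InLp p d → InLp p y ∧ InLp p u

theorem IsIncrementallyFiniteGain.inLp_sub {A : (ℕ → E) → ℕ → F} (hp : 0 < p)
    (hA : IsIncrementallyFiniteGain p A) (hA_stable : IsLpStable p A) (hA_causal : IsCausal A)
    {x x' : ℕ → E} (hx : InLp p (x - x')) : InLp p (A x - A x') := by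
  obtain ⟨γ, hγ, hA_gain⟩ := hA
  refine summable_of_sum_range_le (c := (γ * lpSeqNorm p (x - x')) ^ p)
    (fun t => Real.rpow_nonneg (norm_nonneg _) p) fun T => ?_
  set trunc : (ℕ → E) → ℕ → E := (Set.Iio T).indicator
  have h_trunc (z : ℕ → E) : InLp p (trunc z) :=
    inLp_indicator_of_finite hp.ne' (Set.finite_Iio T) z
  have h_gain : lpSeqNorm p (A (trunc x) - A (trunc x')) ≤ γ * lpSeqNorm p (x - x') :=
    calc lpSeqNorm p (A (trunc x) - A (trunc x'))
        ≤ γ * lpSeqNorm p (trunc x - trunc x') := hA_gain _ _ (h_trunc x) (h_trunc x')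
      _ = γ * lpSeqNorm p (trunc (x - x')) := by rw [← Set.indicator_sub']
      _ ≤ γ * lpSeqNorm p (x - x') := by gcongr; exact lpSeqNorm_indicator_le hp.le hx _
  calc ∑ t ∈ Finset.range T, ‖(A x - A x') t‖ ^ p
      = ∑ t ∈ Finset.range T, ‖(A (trunc x) - A (trunc x')) t‖ ^ p :=
        Finset.sum_congr rfl fun t ht => by
          rw [Pi.sub_apply, Pi.sub_apply, hA_causal.apply_indicator_Iio x (Finset.mem_range.1 ht),
            hA_causal.apply_indicator_Iio x' (Finset.mem_range.1 ht)]
    _ ≤ lpSeqNorm p (A (trunc x) - A (trunc x')) ^ p :=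
        ((hA_stable _ (h_trunc x)).sub hp (hA_stable _ (h_trunc x'))).sum_le_lpSeqNorm_rpow hp.ne' _
    _ ≤ (γ * lpSeqNorm p (x - x')) ^ p :=
        Real.rpow_le_rpow (lpSeqNorm_nonneg p _) h_gain hp.le

variable {G : (ℕ → E) → ℕ → F} {Q K : (ℕ → F) → ℕ → E}

theorem IsInternalModelController.isClosedLoopLpStable (hp : 0 < p)
    (hK : IsInternalModelController G Q K) (hG : IsStrictlyCausal G) (hG_stable : IsLpStable p G)
    (hG_gain : IsIncrementallyFiniteGain p G) (hQ : IsCausal Q) (hQ_stable : IsLpStable p Q) :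
    IsClosedLoopLpStable p G K := by
  intro v d y u hy hu hv hd
  obtain ⟨ω, hω, -⟩ := (hG.comp_isCausal hQ).existsUnique_eq_sub y
  rw [hK y ω hω] at hu
  have hGu : InLp p (G u - G (Q ω)) :=
    hG_gain.inLp_sub hp hG_stable hG.isCausal (by rwa [hu, add_sub_cancel_left])
  have hω_eq : ω = (G u - G (Q ω)) + v :=
    calc ω = y - G (Q ω) := hω
      _ = (G u - G (Q ω)) + v := by rw [hy, add_sub_right_comm]
  have hω_mem : InLp p ω := hω_eq ▸ hGu.add hp hv
  have hu_mem : InLp p u := hu ▸ (hQ_stable ω hω_mem).add hp hd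
  exact ⟨hy ▸ (hG_stable u hu_mem).add hp hv, hu_mem⟩

theorem statement10_general (hp : 0 < p) (hG : IsStrictlyCausal G) (hG_stable : IsLpStable p G)
    (hG_gain : IsIncrementallyFiniteGain p G) (hQ : IsCausal Q) (hQ_stable : IsLpStable p Q)
    (hK : IsInternalModelController G Q K) :
    (∀ y, ∃! ω, ω = y - G (Q ω)) ∧ IsCausal K ∧ IsClosedLoopLpStable p G K :=
  ⟨(hG.comp_isCausal hQ).existsUnique_eq_sub, hK.isCausal hG hQ,
    hK.isClosedLoopLpStable hp hG hG_stable hG_gain hQ hQ_stable⟩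

end Stability

/-- sufficiency of the internal-model (Youla) controller `K = Q ∘ (G Q + I)⁻¹`
for closed-loop ℓ_p-stability, for any causal ℓ_p-stable parameter `Q`. -/
theorem statement10 {r m : ℕ} (p : ℝ) (hp : 1 ≤ p)
    (G : Traj m → Traj r) (Q : Traj r → Traj m) (K : Traj r → Traj m)
    (hG : StrictlyCausal G)
    (hGstab : ∀ u : Traj m, InLp p u → InLp p (G u))
    (hGifg : ∃ γ : ℝ, 0 ≤ γ ∧ ∀ u₁ u₂ : Traj m, InLp p u₁ → InLp p u₂ →
      lpSeqNorm p (G u₁ - G u₂) ≤ γ * lpSeqNorm p (u₁ - u₂))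
    (hQ : Causal Q)
    (hQstab : ∀ ω : Traj r, InLp p ω → InLp p (Q ω))
    -- K y = Q ω, where ω is the unique sequence with ω = y − G(Q ω)
    (hKdef : ∀ y ω : Traj r, ω = y - G (Q ω) → K y = Q ω) :
    (∀ y : Traj r, ∃! ω : Traj r, ω = y - G (Q ω)) ∧
    Causal K ∧
    (∀ (v : Traj r) (d : Traj m) (y : Traj r) (u : Traj m),
      y = G u + v → u = K y + d → InLp p v → InLp p d → InLp p y ∧ InLp p u) :=
  statement10_general (zero_lt_one.trans_le hp) hG hGstab hGifg hQ hQstab hKdef
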